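/- arXiv:1805.09211 — 2 statements merged into one kernel-verified Lean document; each statement's English description precedes it below -/
import Mathlib

section
/- Let d ≥ 6 be even, write D = (d+2)/2, and suppose D ≤ ⌊√D⌋·⌈√D⌉. Let k₃ be the largest nonnegative integer k such that D ≤ (⌊√D⌋ − k)(⌈√D⌉ + k). Then there exists a set S ⊆ ℤ/dℤ × ℤ/dℤ of cardinality |S| = ⌊√D⌋ + ⌈√D⌉ + ⌈⌈(d+1)/4⌉ / (⌈√D⌉ + k₃)⌉ such that there is no unit vector α ∈ ℂ^d for which the vectors X^m Z^n α, (m,n) ∈ S, are pairwise orthogonal; that is, there exists a 1-LOCC indistinguishable set of that many generalized Bell states in d⊗d. -/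
open Complex

/-- `ω d = exp(2πi/d)`, the primitive `d`-th root of unity in `ℂ`. -/
noncomputable def ω (d : ℕ) : ℂ := Complex.exp (2 * Real.pi * Complex.I / d)

/-- The generalized Pauli operator `U_{m,n} = X^m Z^n` acting on `ℂ^d`
(coordinates indexed by `ZMod d`), where `X e_j = e_{j+1}` and `Z e_j = ω^j e_j`:
`(U_{m,n} α)_k = ω^{n (k-m)} α_{k-m}`. -/
noncomputable def pU (d : ℕ) [NeZero d] (m n : ZMod d) (α : ZMod d → ℂ) : ZMod d → ℂ :=
  fun k => ω d ^ (n.val * (k - m).val) * α (k - m)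

/-- The standard Hermitian inner product on `ℂ^d`. -/
noncomputable def ip (d : ℕ) [NeZero d] (α β : ZMod d → ℂ) : ℂ :=
  ∑ j : ZMod d, (starRingEnd ℂ) (α j) * β j

lemma om_pow (d : ℕ) [NeZero d] (a b : ZMod d) :
    ω d ^ (a.val * b.val) = ZMod.stdAddChar (a * b) := by
  have h : a * b = (((a.val * b.val : ℕ) : ℤ) : ZMod d) := by
    push_cast
    simp
  rw [h, ZMod.stdAddChar_coe, ω, ← Complex.exp_nat_mul]
  congr 1
  push_cast
  ring

lemma conj_char (d : ℕ) [NeZero d] (a : ZMod d) :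
    (starRingEnd ℂ) (ZMod.stdAddChar a) = ZMod.stdAddChar (-a) := by
  exact (AddChar.map_neg_eq_conj ZMod.stdAddChar a).symm

/-- Orthogonality expressed by a Fourier coefficient. -/
lemma ip_row (d : ℕ) [NeZero d] (α : ZMod d → ℂ) (m n n' : ZMod d)
    (h : ip d (pU d 0 n α) (pU d m n' α) = 0) :
    ∑ k : ZMod d, ZMod.stdAddChar ((n' - n) * k) * ((starRingEnd ℂ) (α k) * α (k - m)) = 0 := by
  have key : ip d (pU d 0 n α) (pU d m n' α) = ZMod.stdAddChar (-(n' * m)) *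
      ∑ k : ZMod d, ZMod.stdAddChar ((n' - n) * k) * ((starRingEnd ℂ) (α k) * α (k - m)) := by
    unfold ip pU
    rw [Finset.mul_sum]
    refine Finset.sum_congr rfl fun k _ => ?_
    rw [om_pow, om_pow, map_mul, conj_char]
    have : (ZMod.stdAddChar (-(n' * m)) : ℂ) * ZMod.stdAddChar ((n' - n) * k)
      = ZMod.stdAddChar (-(n * (k - 0))) * ZMod.stdAddChar (n' * (k - m)) := by
      rw [← AddChar.map_add_eq_mul, ← AddChar.map_add_eq_mul]
      congr 1
      ring
    simp only [sub_zero] at this ⊢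
    linear_combination (-((starRingEnd ℂ) (α k) * α (k - m))) * this
  rw [key] at h
  rcases mul_eq_zero.1 h with h | h
  · exfalso
    have h1 : (ZMod.stdAddChar (-(n' * m)) : ℂ) * ZMod.stdAddChar (n' * m) = 1 := by
      rw [← AddChar.map_add_eq_mul]
      simp
    rw [h] at h1
    simp at h1
  · exact h

lemma fourier_vanish (d : ℕ) [NeZero d] (f : ZMod d → ℂ)
    (h : ∀ x : ZMod d, ∑ k : ZMod d, ZMod.stdAddChar (x * k) * f k = 0) : f = 0 := by
  apply (ZMod.dft (N := d) (E := ℂ)).injective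
  rw [map_zero]
  ext x
  rw [ZMod.dft_apply]
  have := h (-x)
  simp only [Pi.zero_apply, smul_eq_mul]
  rw [← this]
  refine Finset.sum_congr rfl fun k _ => ?_
  congr 2
  ring

/-- Sparse function with consecutive Fourier zeros vanishes. -/
lemma sparse_zero (d : ℕ) [NeZero d] (p : ZMod d → ℂ) (T : Finset (ZMod d))
    (hT : ∀ k, k ∉ T → p k = 0) (x₀ : ZMod d) (N : ℕ) (hN : T.card ≤ N)
    (h : ∀ i < N, ∑ k : ZMod d, ZMod.stdAddChar ((x₀ + (i : ZMod d)) * k) * p k = 0) :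
    ∀ k, p k = 0 := by
  intro k₀
  by_cases hk : k₀ ∈ T
  swap
  · exact hT _ hk
  have hpoly : ∀ P : Polynomial ℂ, P.natDegree < N →
      ∑ k : ZMod d, P.eval (ZMod.stdAddChar k) * (ZMod.stdAddChar (x₀ * k) * p k) = 0 := by
    intro P hP
    simp_rw [Polynomial.eval_eq_sum_range, Finset.sum_mul]
    rw [Finset.sum_comm]
    refine Finset.sum_eq_zero fun i hi => ?_
    have hi' : i < N := by
      have := Finset.mem_range.1 hi
      omega
    rw [← mul_zero (P.coeff i), ← h i hi', Finset.mul_sum]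
    refine Finset.sum_congr rfl fun k _ => ?_
    rw [← AddChar.map_nsmul_eq_pow, add_mul, AddChar.map_add_eq_mul, nsmul_eq_mul]
    ring
  have hdeg : (∏ k ∈ T.erase k₀, (Polynomial.X - Polynomial.C (ZMod.stdAddChar k : ℂ))).natDegree
      < N := by
    rw [Polynomial.natDegree_prod_of_monic _ _ (fun k _ => Polynomial.monic_X_sub_C _)]
    simp only [Polynomial.natDegree_X_sub_C, Finset.sum_const, smul_eq_mul, mul_one]
    have := Finset.card_erase_lt_of_mem hk
    omega
  have := hpoly _ hdeg
  rw [Finset.sum_eq_single k₀] at this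
  · rcases mul_eq_zero.1 this with h1 | h1
    · exfalso
      rw [Polynomial.eval_prod, Finset.prod_eq_zero_iff] at h1
      obtain ⟨a, ha, h2⟩ := h1
      simp only [Polynomial.eval_sub, Polynomial.eval_X, Polynomial.eval_C, sub_eq_zero] at h2
      exact (Finset.mem_erase.1 ha).1 (ZMod.injective_stdAddChar h2).symm
    · rcases mul_eq_zero.1 h1 with h1 | h1
      · exfalso
        have h2 : (ZMod.stdAddChar (x₀ * k₀) : ℂ) * ZMod.stdAddChar (-(x₀ * k₀)) = 1 := by
          rw [← AddChar.map_add_eq_mul]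
          simp
        rw [h1] at h2
        simp at h2
      · exact h1
  · intro b _ hb
    by_cases hbT : b ∈ T
    · rw [Polynomial.eval_prod, Finset.prod_eq_zero (Finset.mem_erase.2 ⟨hb, hbT⟩) (by simp)]
      simp
    · rw [hT b hbT]
      simp
  · simp

/-- The analytic heart. -/
lemma core (d h K : ℕ) [NeZero d] (hd : d = 2 * h) (hK : d + 1 ≤ 4 * K) (hKh : K ≤ h)
    (α : ZMod d → ℂ)
    (h1 : ∀ x : ℕ, x ≤ h → ∑ k : ZMod d, ZMod.stdAddChar ((x : ZMod d) * k) *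
      ((starRingEnd ℂ) (α k) * α (k - (h : ZMod d))) = 0)
    (h2 : ∀ x : ℕ, h + 1 ≤ x + K → x ≤ h → ∑ k : ZMod d, ZMod.stdAddChar ((x : ZMod d) * k) *
      ((starRingEnd ℂ) (α k) * α (k - 0)) = 0) : ∀ k, α k = 0 := by
  have hhh : (h : ZMod d) + (h : ZMod d) = 0 := by
    rw [← Nat.cast_add, ← two_mul, ← hd]
    simp
  have hdpos : 0 < d := Nat.pos_of_ne_zero (NeZero.ne d)
  have hf : (fun k : ZMod d => (starRingEnd ℂ) (α k) * α (k - (h : ZMod d))) = 0 := by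
    apply fourier_vanish
    intro x
    have hx : x.val < d := ZMod.val_lt x
    by_cases hxh : x.val ≤ h
    · have := h1 x.val hxh
      rwa [ZMod.natCast_zmod_val] at this
    · have h3 := h1 (d - x.val) (by omega)
      have h4 : ((d - x.val : ℕ) : ZMod d) = -x := by
        rw [Nat.cast_sub hx.le]
        simp
      rw [h4] at h3
      have h5 := congrArg (starRingEnd ℂ) h3
      rw [map_sum, map_zero] at h5
      rw [← Equiv.sum_comp (Equiv.subRight (h : ZMod d))]
      have h6 : (ZMod.stdAddChar (x * (h : ZMod d)) : ℂ) * 0 = 0 := mul_zero _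
      rw [← mul_zero (ZMod.stdAddChar (-(x * (h : ZMod d))) : ℂ), ← h5, Finset.mul_sum]
      refine Finset.sum_congr rfl fun k _ => ?_
      simp only [Equiv.subRight_apply, map_mul, conj_char, Complex.conj_conj]
      have e1 : k - (h : ZMod d) - (h : ZMod d) = k := by
        rw [sub_sub, hhh, sub_zero]
      rw [e1, mul_sub, sub_eq_add_neg, AddChar.map_add_eq_mul, neg_mul, neg_neg]
      ring
  have hprod : ∀ k, α k = 0 ∨ α (k - (h : ZMod d)) = 0 := by
    intro k
    have := congrFun hf k
    simpa using this
  classical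
  set T : Finset (ZMod d) := Finset.univ.filter fun k => α k ≠ 0 with hTdef
  have hTcard : T.card ≤ h := by
    have hdis : Disjoint T (T.image fun k => k + (h : ZMod d)) := by
      rw [Finset.disjoint_left]
      intro a ha hb0
      obtain ⟨b, hb, rfl⟩ := Finset.mem_image.1 hb0
      have ha' := (Finset.mem_filter.1 ha).2
      have hb' := (Finset.mem_filter.1 hb).2
      rcases hprod (b + (h : ZMod d)) with h3 | h3
      · exact ha' h3
      · rw [add_sub_cancel_right] at h3
        exact hb' h3
    have h3 := Finset.card_le_univ (T ∪ T.image fun k => k + (h : ZMod d))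
    rw [Finset.card_union_of_disjoint hdis,
      Finset.card_image_of_injective _ (add_left_injective _), ZMod.card] at h3
    omega
  have hp := sparse_zero d (fun k => (starRingEnd ℂ) (α k) * α (k - 0)) T
    (fun k hk => by
      have : α k = 0 := by
        by_contra h3
        exact hk (Finset.mem_filter.2 ⟨Finset.mem_univ _, h3⟩)
      simp [this]) ((h + 1 - K : ℕ) : ZMod d) (2 * K - 1) (by omega) (fun i hi => by
      by_cases hi' : i < K
      · have := h2 (h + 1 - K + i) (by omega) (by omega)
        rwa [Nat.cast_add] at this
      · have h3 := h2 (d - (h + 1 - K + i)) (by omega) (by omega)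
        have h4 : ((d - (h + 1 - K + i) : ℕ) : ZMod d) =
            -(((h + 1 - K : ℕ) : ZMod d) + (i : ZMod d)) := by
          rw [Nat.cast_sub (by omega)]
          simp
        rw [h4] at h3
        have h5 := congrArg (starRingEnd ℂ) h3
        rw [map_sum, map_zero] at h5
        rw [← h5]
        refine Finset.sum_congr rfl fun k _ => ?_
        simp only [map_mul, conj_char, Complex.conj_conj, neg_mul, neg_neg, sub_zero]
        ring)
  intro k
  have := hp k
  simpa using this

lemma exists_set (d h K s t r : ℕ) [NeZero d] (hd : d = 2 * h) (hh : 3 ≤ h)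
    (hK : d + 1 ≤ 4 * K) (hKh : K ≤ h) (hst : h + 1 ≤ s * t) (hrt : K ≤ r * t)
    (hcard : s + t + r ≤ d ^ 2) :
    ∃ S : Finset (ZMod d × ZMod d), S.card = s + t + r ∧
      ¬ ∃ α : ZMod d → ℂ, ip d α α = 1 ∧
        ∀ p ∈ S, ∀ q ∈ S, p ≠ q → ip d (pU d p.1 p.2 α) (pU d q.1 q.2 α) = 0 := by
  classical
  have ht : 0 < t := by
    rcases Nat.eq_zero_or_pos t with h0 | h0
    · subst h0
      omega
    · exact h0
  obtain ⟨A, hA⟩ : ∃ A : Finset (ZMod d × ZMod d), A =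
    (Finset.range s).image fun i => ((h : ZMod d), ((t * i : ℕ) : ZMod d)) := ⟨_, rfl⟩
  obtain ⟨B, hB⟩ : ∃ B : Finset (ZMod d × ZMod d), B =
    (Finset.range t).image fun b => ((0 : ZMod d), -((b : ℕ) : ZMod d)) := ⟨_, rfl⟩
  obtain ⟨C, hC⟩ : ∃ C : Finset (ZMod d × ZMod d), C =
    (Finset.range r).image fun i => ((0 : ZMod d), ((h + 1 - K + t * i : ℕ) : ZMod d)) := ⟨_, rfl⟩
  have hle : (A ∪ B ∪ C).card ≤ s + t + r := by
    have h1 := Finset.card_union_le (A ∪ B) C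
    have h2 := Finset.card_union_le A B
    have h3 : A.card ≤ s := hA ▸ Finset.card_image_le.trans (Finset.card_range _).le
    have h4 : B.card ≤ t := hB ▸ Finset.card_image_le.trans (Finset.card_range _).le
    have h5 : C.card ≤ r := hC ▸ Finset.card_image_le.trans (Finset.card_range _).le
    omega
  obtain ⟨S, hS, hSc⟩ := Finset.exists_superset_card_eq hle (by
    rw [Fintype.card_prod, ZMod.card, ← sq]
    exact hcard)
  refine ⟨S, hSc, ?_⟩
  rintro ⟨α, hα, horth⟩
  have hne : ∀ x : ℕ, 0 < x → x < d → (x : ZMod d) ≠ 0 := by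
    intro x h0 hx h1
    rw [ZMod.natCast_eq_zero_iff] at h1
    exact absurd (Nat.le_of_dvd h0 h1) (by omega)
  have hBS : ∀ b < t, ((0 : ZMod d), -((b : ℕ) : ZMod d)) ∈ S := fun b hb =>
    hS (Finset.mem_union_left _ (Finset.mem_union_right _
      (hB ▸ Finset.mem_image.2 ⟨b, Finset.mem_range.2 hb, rfl⟩)))
  have hAS : ∀ i < s, ((h : ZMod d), ((t * i : ℕ) : ZMod d)) ∈ S := fun i hi =>
    hS (Finset.mem_union_left _ (Finset.mem_union_left _
      (hA ▸ Finset.mem_image.2 ⟨i, Finset.mem_range.2 hi, rfl⟩)))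
  have hCS : ∀ i < r, ((0 : ZMod d), ((h + 1 - K + t * i : ℕ) : ZMod d)) ∈ S := fun i hi =>
    hS (Finset.mem_union_right _ (hC ▸ Finset.mem_image.2 ⟨i, Finset.mem_range.2 hi, rfl⟩))
  have hhne : (h : ZMod d) ≠ 0 := hne h (by omega) (by omega)
  have c1 : ∀ x : ℕ, x ≤ h → ∑ k : ZMod d, ZMod.stdAddChar ((x : ZMod d) * k) *
      ((starRingEnd ℂ) (α k) * α (k - (h : ZMod d))) = 0 := by
    intro x hx
    have hdiv : x / t < s := (Nat.div_lt_iff_lt_mul ht).2 (lt_of_lt_of_le (by omega) hst)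
    have hpq : ((0 : ZMod d), -((x % t : ℕ) : ZMod d)) ≠
        ((h : ZMod d), ((t * (x / t) : ℕ) : ZMod d)) := by
      intro h0
      exact hhne (Prod.mk.inj h0).1.symm
    have e0 := horth _ (hBS _ (Nat.mod_lt x ht)) _ (hAS _ hdiv) hpq
    have e := ip_row d α (h : ZMod d) (-((x % t : ℕ) : ZMod d)) ((t * (x / t) : ℕ) : ZMod d) e0
    have hsum : ((t * (x / t) : ℕ) : ZMod d) - (-((x % t : ℕ) : ZMod d)) = (x : ZMod d) := by
      rw [sub_neg_eq_add, ← Nat.cast_add, Nat.div_add_mod]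
    rw [hsum] at e
    exact e
  have c2 : ∀ x : ℕ, h + 1 ≤ x + K → x ≤ h → ∑ k : ZMod d, ZMod.stdAddChar ((x : ZMod d) * k) *
      ((starRingEnd ℂ) (α k) * α (k - 0)) = 0 := by
    intro x hx1 hx2
    obtain ⟨y, hy⟩ : ∃ y, x = h + 1 - K + y := ⟨x - (h + 1 - K), by omega⟩
    have hxne : (x : ZMod d) ≠ 0 := hne x (by omega) (by omega)
    have hdiv : y / t < r := (Nat.div_lt_iff_lt_mul ht).2 (lt_of_lt_of_le (by omega) hrt)
    have hsum : ((h + 1 - K + t * (y / t) : ℕ) : ZMod d) - (-((y % t : ℕ) : ZMod d)) =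
        (x : ZMod d) := by
      rw [sub_neg_eq_add, ← Nat.cast_add, add_assoc, Nat.div_add_mod, hy]
    have hpq : ((0 : ZMod d), -((y % t : ℕ) : ZMod d)) ≠
        ((0 : ZMod d), ((h + 1 - K + t * (y / t) : ℕ) : ZMod d)) := by
      intro h0
      rw [(Prod.mk.inj h0).2, sub_self] at hsum
      exact hxne hsum.symm
    have e0 := horth _ (hBS _ (Nat.mod_lt y ht)) _ (hCS _ hdiv) hpq
    have e := ip_row d α 0 (-((y % t : ℕ) : ZMod d)) ((h + 1 - K + t * (y / t) : ℕ) : ZMod d) e0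
    rw [hsum] at e
    exact e
  have hz := core d h K hd hK hKh α c1 c2
  have : ip d α α = 0 := by
    unfold ip
    simp [hz]
  rw [this] at hα
  exact zero_ne_one hα

/-- (Theorem 5 of the paper, first case.) Let `d ≥ 6` be even, `D = (d+2)/2`,
and suppose `D ≤ ⌊√D⌋⌈√D⌉`. Let `k₃` be the largest `k ≥ 0` with
`D ≤ (⌊√D⌋ - k)(⌈√D⌉ + k)`. Then there exists a 1-LOCC indistinguishable set of
`⌊√D⌋ + ⌈√D⌉ + ⌈⌈(d+1)/4⌉ / (⌈√D⌉ + k₃)⌉` generalized Bell states in `d ⊗ d`. -/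
theorem stmt_18 (d : ℕ) [NeZero d] (hd : 6 ≤ d) (heven : Even d)
    (D : ℕ) (hD : D = (d + 2) / 2)
    (hle : D ≤ ⌊Real.sqrt D⌋₊ * ⌈Real.sqrt D⌉₊)
    (k₃ : ℕ)
    (hk₃ : IsGreatest {k : ℕ |
      (D : ℤ) ≤ ((⌊Real.sqrt D⌋₊ : ℤ) - (k : ℤ)) * ((⌈Real.sqrt D⌉₊ : ℤ) + (k : ℤ))} k₃) :
    ∃ S : Finset (ZMod d × ZMod d),
      S.card = ⌊Real.sqrt D⌋₊ + ⌈Real.sqrt D⌉₊ +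
          ⌈(⌈((d : ℚ) + 1) / 4⌉₊ : ℚ) / ((⌈Real.sqrt D⌉₊ : ℚ) + (k₃ : ℚ))⌉₊ ∧
      ¬ ∃ α : ZMod d → ℂ, ip d α α = 1 ∧
        ∀ p ∈ S, ∀ q ∈ S, p ≠ q → ip d (pU d p.1 p.2 α) (pU d q.1 q.2 α) = 0 := by
  obtain ⟨h, hh⟩ := heven
  have hDh : D = h + 1 := by omega
  set a := ⌊Real.sqrt D⌋₊ with ha
  set b := ⌈Real.sqrt D⌉₊ with hb
  have hk := hk₃.1
  simp only [Set.mem_ofPred_eq] at hk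
  have hDpos : (0 : ℤ) < D := by omega
  have hs : k₃ < a := by
    by_contra hcon
    have h1 : ((a : ℤ) - k₃) ≤ 0 := by omega
    have h2 : (0 : ℤ) ≤ (b : ℤ) + k₃ := by positivity
    nlinarith [mul_nonneg (neg_nonneg.2 h1) h2]
  have hsq : Real.sqrt D ≤ D := by
    rw [Real.sqrt_le_left (by positivity)]
    have : (1 : ℝ) ≤ D := by exact_mod_cast hDpos
    nlinarith
  have haD : a ≤ D := by
    have := Nat.floor_le_floor hsq
    rwa [Nat.floor_natCast] at this
  have hbD : b ≤ D := Nat.ceil_le.2 hsq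
  obtain ⟨s, hsa⟩ : ∃ s, a = s + k₃ := ⟨a - k₃, by omega⟩
  have hst : D ≤ s * (b + k₃) := by
    have h1 : ((a : ℤ) - k₃) = s := by omega
    rw [h1] at hk
    exact_mod_cast hk
  set K := ⌈((d : ℚ) + 1) / 4⌉₊ with hK
  have hK1 : d + 1 ≤ 4 * K := by
    have := Nat.le_ceil (((d : ℚ) + 1) / 4)
    rw [← hK] at this
    have h2 : (d : ℚ) + 1 ≤ 4 * K := by linarith
    exact_mod_cast h2
  have hK2 : K ≤ h := by
    apply Nat.ceil_le.2
    have h1 : (d : ℚ) = h + h := by exact_mod_cast hh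
    have h2 : (3 : ℚ) ≤ h := by exact_mod_cast (by omega : 3 ≤ h)
    linarith
  set r := ⌈(K : ℚ) / ((b : ℚ) + (k₃ : ℚ))⌉₊ with hr
  have htpos : 0 < b + k₃ := by
    rcases Nat.eq_zero_or_pos (b + k₃) with h0 | h0
    · rw [h0] at hst
      omega
    · exact h0
  have htQ : (1 : ℚ) ≤ (b : ℚ) + k₃ := by exact_mod_cast htpos
  have hr1 : K ≤ r * (b + k₃) := by
    have := Nat.le_ceil ((K : ℚ) / ((b : ℚ) + (k₃ : ℚ)))
    rw [← hr, div_le_iff₀ (by linarith)] at this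
    exact_mod_cast this
  have hr2 : r ≤ K := by
    apply Nat.ceil_le.2
    exact div_le_self (by positivity) htQ
  obtain ⟨S, hS, hS'⟩ := exists_set d h K s (b + k₃) r (by omega) (by omega) hK1 hK2
    (by omega) hr1 (by nlinarith)
  exact ⟨S, by omega, hS'⟩
end

section
/- Let d ≥ 6 be even, write D = (d+2)/2, and suppose ⌊√D⌋·⌈√D⌉ < D ≤ ⌊√D⌋·(⌈√D⌉ + 1). Let k₄ be the largest nonnegative integer k such that D ≤ (⌊√D⌋ − k)(⌈√D⌉ + 1 + k). Then there exists a set S ⊆ ℤ/dℤ × ℤ/dℤ of cardinality |S| = ⌊√D⌋ + ⌈√D⌉ + 1 + ⌈⌈(d+1)/4⌉ / (⌈√D⌉ + 1 + k₄)⌉ such that there is no unit vector α ∈ ℂ^d for which the vectors X^m Z^n α, (m,n) ∈ S, are pairwise orthogonal; that is, there exists a 1-LOCC indistinguishable set of that many generalized Bell states in d⊗d. -/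
open Complex

section helpers
open Finset

lemma h19_omega (d : ℕ) [NeZero d] (n k : ZMod d) :
    ω d ^ (n.val * k.val) = ZMod.stdAddChar (n * k) := by
  have h : n * k = (((n.val * k.val : ℕ) : ℤ) : ZMod d) := by
    push_cast
    simp
  rw [h, ZMod.stdAddChar_coe, ω, ← Complex.exp_nat_mul]
  congr 1
  push_cast
  ring

lemma h19_conj (d : ℕ) [NeZero d] (x : ZMod d) :
    (starRingEnd ℂ) (ZMod.stdAddChar x) = ZMod.stdAddChar (-x) := by
  rw [AddChar.map_neg_eq_conj]

lemma h19_inj (d : ℕ) [NeZero d] (g : ZMod d → ℂ)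
    (h : ∀ c, ∑ k, ZMod.stdAddChar (c * k) * g k = 0) : g = 0 := by
  apply (ZMod.dft (N := d) (E := ℂ)).injective
  rw [map_zero]
  funext c
  rw [ZMod.dft_apply]
  rw [Pi.zero_apply, ← h (-c)]
  refine sum_congr rfl fun k _ => ?_
  rw [smul_eq_mul]
  congr 2
  ring

lemma h19_sum (d : ℕ) [NeZero d] (b : ZMod d) :
    ∑ x : ZMod d, (ZMod.stdAddChar (x * b) : ℂ) = if b = 0 then (d : ℂ) else 0 := by
  rw [AddChar.sum_mulShift b (ZMod.isPrimitive_stdAddChar d)]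
  simp [ZMod.card]

/-- zero nontrivial Fourier coefficients imply constant -/
lemma h19_const (d : ℕ) [NeZero d] (g : ZMod d → ℂ)
    (h : ∀ c, c ≠ 0 → ∑ k, ZMod.stdAddChar (c * k) * g k = 0) (h0 : ∑ k, g k = 1) (k : ZMod d) :
    g k = 1 / d := by
  have hd : (d : ℂ) ≠ 0 := by exact_mod_cast NeZero.ne d
  have := h19_inj d (fun k => g k - 1 / d) (by
    intro c
    simp only [mul_sub, sum_sub_distrib]
    rw [← sum_mul]
    have e : ∑ k : ZMod d, (ZMod.stdAddChar (c * k) : ℂ) = if c = 0 then (d : ℂ) else 0 := by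
      rw [← h19_sum]
      exact sum_congr rfl fun k _ => by rw [mul_comm]
    rw [e]
    by_cases hc : c = 0
    · subst hc
      simp [h0, hd]
    · rw [h c hc]
      simp [hc])
  have := congrFun this k
  simpa [sub_eq_zero] using this

lemma h19_auto (d : ℕ) [NeZero d] (f : ZMod d → ℂ) (r : ℂ)
    (hf : ∀ k, f k * (starRingEnd ℂ) (f k) = r) (s : ZMod d) (hs : s ≠ 0) :
    ∑ c : ZMod d, (∑ k, ZMod.stdAddChar ((c + s) * k) * f k) *
      (starRingEnd ℂ) (∑ k, ZMod.stdAddChar (c * k) * f k) = 0 := by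
  have e : ∀ c : ZMod d, (∑ k, ZMod.stdAddChar ((c + s) * k) * f k) *
      (starRingEnd ℂ) (∑ k, ZMod.stdAddChar (c * k) * f k) =
      ∑ j, ∑ k, ZMod.stdAddChar (c * (j - k)) *
        (ZMod.stdAddChar (s * j) * f j * (starRingEnd ℂ) (f k)) := by
    intro c
    rw [map_sum, sum_mul_sum]
    refine sum_congr rfl fun j _ => sum_congr rfl fun k _ => ?_
    rw [map_mul (starRingEnd ℂ), h19_conj, add_mul, mul_sub, sub_eq_add_neg, AddChar.map_add_eq_mul,
      AddChar.map_add_eq_mul]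
    ring
  rw [sum_congr rfl fun c _ => e c, sum_comm]
  have e2 : ∀ j : ZMod d, ∑ c : ZMod d, ∑ k : ZMod d, ZMod.stdAddChar (c * (j - k)) *
        (ZMod.stdAddChar (s * j) * f j * (starRingEnd ℂ) (f k)) =
        ZMod.stdAddChar (j * s) * (d * r) := by
    intro j
    rw [sum_comm]
    simp_rw [← sum_mul, h19_sum, sub_eq_zero]
    simp only [ite_mul, zero_mul, sum_ite_eq, mem_univ, if_true]
    rw [← hf j, mul_comm s j]
    ring
  rw [sum_congr rfl fun c _ => e2 c, ← sum_mul, h19_sum, if_neg hs, zero_mul]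

lemma h19_core (d : ℕ) [NeZero d] (K : ℕ) (hK : d + 2 ≤ 4 * K) (hev : Even d) (F : ZMod d → ℂ)
    (hneg : ∀ c, F c = 0 → F (-c) = 0) (hF : ∀ n : ℕ, n < K → F n = 0)
    (hh : F ((d / 2 : ℕ) : ZMod d) = 0)
    (hs : ∀ s : ZMod d, s ≠ 0 → ∑ c, F (c + s) * (starRingEnd ℂ) (F c) = 0) : ∀ c, F c = 0 := by
  by_contra! hcon
  obtain ⟨c, hc⟩ := hcon
  have hex : ∃ n : ℕ, F (n : ZMod d) ≠ 0 := ⟨c.val, by simpa using hc⟩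
  classical
  have hn0 := Nat.find_spec hex
  have hmin : ∀ m : ℕ, m < Nat.find hex → F (m : ZMod d) = 0 := fun m hm => by
    simpa using Nat.find_min hex hm
  set n := Nat.find hex with hn
  have hKn : K ≤ n := by
    by_contra! h
    exact hn0 (hF n h)
  have hd : 0 < d := Nat.pos_of_ne_zero (NeZero.ne d)
  have hnd : n < d := by
    have h1 : F ((c.val : ℕ) : ZMod d) ≠ 0 := by simpa using hc
    have : n ≤ c.val := Nat.find_min' hex h1
    exact this.trans_lt c.val_lt
  have hcast : ∀ m : ℕ, m ≤ d → ((d - m : ℕ) : ZMod d) = -(m : ZMod d) := fun m hm => by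
    rw [Nat.cast_sub hm]; simp
  have hneg' : ∀ m : ℕ, m ≤ d → F (m : ZMod d) ≠ 0 → m ≤ d - n := by
    intro m hm h
    have : F ((d - m : ℕ) : ZMod d) ≠ 0 := by
      rw [hcast m hm]
      intro h2
      exact h (by simpa using hneg _ h2)
    have : n ≤ d - m := Nat.find_min' hex this
    omega
  have h2n : 2 * n < d := by
    have h1 := hneg' n hnd.le hn0
    have h2 : n ≠ d / 2 := by
      intro h; rw [h] at hn0; exact hn0 hh
    obtain ⟨e, he⟩ := hev
    omega
  have hsne : ((2 * n : ℕ) : ZMod d) ≠ 0 := by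
    rw [Ne, ZMod.natCast_eq_zero_iff]
    intro h
    have := Nat.le_of_dvd (by omega) h
    omega
  have hsum := hs _ hsne
  rw [sum_eq_single (-(n : ZMod d))] at hsum
  · rcases mul_eq_zero.mp hsum with h | h
    · apply hn0
      rw [← h]; congr 1; push_cast; ring
    · rw [map_eq_zero] at h
      exact hn0 (by simpa using hneg _ h)
  · intro x _ hx
    by_contra hne
    have h1 : F x ≠ 0 := fun h => hne (by rw [h]; simp)
    have h2 : F (x + ((2 * n : ℕ) : ZMod d)) ≠ 0 := fun h => hne (by rw [h]; simp)
    obtain ⟨m, hm, rfl⟩ : ∃ m : ℕ, m < d ∧ (m : ZMod d) = x := ⟨x.val, x.val_lt, by simp⟩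
    have a1 := hneg' m hm.le h1
    have a2 : n ≤ m := Nat.find_min' hex h1
    have a3 : m ≠ d - n := by
      rintro h
      apply hx
      rw [h, hcast n hnd.le]
    rw [← Nat.cast_add] at h2
    by_cases h : m + 2 * n < d
    · have := hneg' _ h.le h2
      omega
    · have e : ((m + 2 * n : ℕ) : ZMod d) = ((m + 2 * n - d : ℕ) : ZMod d) := by
        rw [Nat.cast_sub (by omega)]; simp
      rw [e] at h2
      have : n ≤ m + 2 * n - d := Nat.find_min' hex h2
      omega
  · simp

/-- the inner product as Fourier coefficient -/
lemma h19_ip (d : ℕ) [NeZero d] (h n n' : ZMod d) (α : ZMod d → ℂ)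
    (h0 : ip d (pU d 0 n' α) (pU d h n α) = 0) :
    ∑ k, ZMod.stdAddChar ((n - n') * k) * ((starRingEnd ℂ) (α k) * α (k - h)) = 0 := by
  unfold ip pU at h0
  have hu : (ZMod.stdAddChar (n * h) : ℂ) * ∑ k : ZMod d,
      (starRingEnd ℂ) (ω d ^ (n'.val * (k - 0).val) * α (k - 0)) *
        (ω d ^ (n.val * (k - h).val) * α (k - h)) = 0 := by
    rw [h0, mul_zero]
  rw [← hu, mul_sum]
  refine sum_congr rfl fun k _ => ?_
  rw [h19_omega, h19_omega, map_mul (starRingEnd ℂ), h19_conj, sub_zero]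
  have : (n - n') * k = n * h + (-(n' * k) + n * (k - h)) := by ring
  rw [this, AddChar.map_add_eq_mul, AddChar.map_add_eq_mul]
  ring

lemma h19_comb (b x a : ℕ) (hb : 0 < b) (hx : x < a * b) :
    ∃ i < a, ∃ q < b, (i + 1) * b - 1 = x + q := by
  refine ⟨x / b, Nat.div_lt_of_lt_mul (by rwa [mul_comm]), b - 1 - x % b, by omega, ?_⟩
  have h1 := Nat.div_add_mod x b
  have h2 := Nat.mod_lt x hb
  have : (x / b + 1) * b = b * (x / b) + b := by ring
  rw [this]
  omega

lemma h19_ana (d : ℕ) [NeZero d] (hev : Even d) (a b t K : ℕ) (hb : 0 < b)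
    (hab : d / 2 + 1 ≤ a * b) (hK : d + 2 ≤ 4 * K) (ht : K ≤ t * b)
    (H : ZMod d) (hH : H = ((d / 2 : ℕ) : ZMod d)) (hHH : H + H = 0) (hH0 : H ≠ 0)
    (α : ZMod d → ℂ) (hα : ip d α α = 1) (A E : Finset ℕ) (S : Finset (ZMod d × ZMod d))
    (hAb : ∀ q < b, q ∈ A) (hAi : ∀ i < a, (i + 1) * b - 1 ∈ A)
    (hAS : ∀ n ∈ A, ((0 : ZMod d), (n : ZMod d)) ∈ S)
    (hES : ∀ n ∈ E, (H, (n : ZMod d)) ∈ S)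
    (hEi : ∀ i < t, (i + 1) * b - 1 ∈ E) (hEh : d / 2 ∈ E)
    (hSS : ∀ x y x' y' : ZMod d, (x, y) ∈ S → (x', y') ∈ S → (x, y) ≠ (x', y') →
      ip d (pU d x y α) (pU d x' y' α) = 0) : False := by
  have hdpos : 0 < d := Nat.pos_of_ne_zero (NeZero.ne d)
  -- the modulus is constant
  have hG : ∀ c : ZMod d, c ≠ 0 →
      ∑ k, ZMod.stdAddChar (c * k) * ((starRingEnd ℂ) (α k) * α k) = 0 := by
    have key : ∀ p : ℕ, p ∈ A → ∀ q : ℕ, q ∈ A → (p : ZMod d) - (q : ZMod d) ≠ 0 →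
        ∑ k, ZMod.stdAddChar (((p : ZMod d) - (q : ZMod d)) * k) * ((starRingEnd ℂ) (α k) * α k) = 0 := by
      intro p hp q hq hne
      have := h19_ip d 0 p q α (hSS _ _ _ _ (hAS q hq) (hAS p hp) (by
        intro h
        apply hne
        rw [Prod.mk.injEq] at h
        rw [h.2, sub_self]))
      simpa using this
    intro c hc
    have h1 : ∃ x : ℕ, x ≤ d / 2 ∧ (c = x ∨ c = -(x : ZMod d)) := by
      by_cases h : c.val ≤ d / 2
      · exact ⟨c.val, h, Or.inl (by simp)⟩
      · refine ⟨d - c.val, by have := c.val_lt; omega, Or.inr ?_⟩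
        rw [Nat.cast_sub c.val_lt.le]; simp
    obtain ⟨x, hx, hcx⟩ := h1
    obtain ⟨i, hi, q, hq, he⟩ := h19_comb b x a hb (by omega)
    have he' : (x : ZMod d) = (((i + 1) * b - 1 : ℕ) : ZMod d) - (q : ZMod d) := by
      rw [he]; push_cast; ring
    rcases hcx with h | h
    · rw [h, he']
      exact key _ (hAi i hi) _ (hAb q hq) (by rw [← he', ← h]; exact hc)
    · rw [h, he', neg_sub]
      exact key _ (hAb q hq) _ (hAi i hi) (by rw [← neg_sub, ← he', ← h]; exact hc)
  have hmod := h19_const d (fun k => (starRingEnd ℂ) (α k) * α k) hG hα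
  have hdC : (d : ℂ) ≠ 0 := by exact_mod_cast hdpos.ne'
  set f : ZMod d → ℂ := fun k => (starRingEnd ℂ) (α k) * α (k - H) with hf
  have hff : ∀ k, f k * (starRingEnd ℂ) (f k) = 1 / d * (1 / d) := by
    intro k
    rw [← hmod k]
    nth_rewrite 2 [hmod k]
    rw [← hmod (k - H)]
    simp only [hf, map_mul, Complex.conj_conj]
    ring
  set F : ZMod d → ℂ := fun c => ∑ k, ZMod.stdAddChar (c * k) * f k with hFdef
  have hFz : ∀ p : ℕ, p ∈ E → ∀ q : ℕ, q ∈ A → F ((p : ZMod d) - (q : ZMod d)) = 0 := by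
    intro p hp q hq
    exact h19_ip d H p q α (hSS _ _ _ _ (hAS q hq) (hES p hp) (by
      intro h
      rw [Prod.mk.injEq] at h
      exact hH0 h.1.symm))
  have hneg : ∀ c, F c = 0 → F (-c) = 0 := by
    intro c hc
    have hsh : F c = ∑ k, ZMod.stdAddChar (c * (k - H)) * f (k - H) :=
      (Equiv.sum_comp (Equiv.subRight H) (fun k => (ZMod.stdAddChar (c * k) : ℂ) * f k)).symm
    have : F (-c) = (starRingEnd ℂ) (ZMod.stdAddChar (c * H) * F c) := by
      rw [hsh, mul_sum, map_sum]
      refine sum_congr rfl fun k _ => ?_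
      have e1 : k - H - H = k := by rw [sub_sub, hHH, sub_zero]
      have e2 : -c * k = -(c * H) + -(c * (k - H)) := by ring
      simp only [hf, map_mul, h19_conj, Complex.conj_conj, e1]
      rw [e2, AddChar.map_add_eq_mul]
      ring
    rw [this, hc]; simp
  have hF0 := h19_core d K hK hev F hneg (by
      intro n hn
      obtain ⟨i, hi, q, hq, he⟩ := h19_comb b n t hb (by omega)
      have he' : (n : ZMod d) = (((i + 1) * b - 1 : ℕ) : ZMod d) - (q : ZMod d) := by
        rw [he]; push_cast; ring
      rw [he']
      exact hFz _ (hEi i hi) _ (hAb q hq))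
    (by
      have := hFz (d / 2) hEh 0 (hAb 0 hb)
      simpa using this)
    (fun s hs => h19_auto d f _ hff s hs)
  have hf0 := h19_inj d f hF0
  have := hff 0
  rw [hf0] at this
  simp [hdC] at this

lemma h19_main (d : ℕ) [NeZero d] (hev : Even d) (a b t K : ℕ) (hb : 0 < b)
    (ha : 0 < a) (hab : d / 2 + 1 ≤ a * b) (hK : d + 2 ≤ 4 * K) (ht : K ≤ t * b)
    (hcard : a + b + t ≤ d * d) :
    ∃ S : Finset (ZMod d × ZMod d), S.card = a + b + t ∧
      ¬ ∃ α : ZMod d → ℂ, ip d α α = 1 ∧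
        ∀ p ∈ S, ∀ q ∈ S, p ≠ q → ip d (pU d p.1 p.2 α) (pU d q.1 q.2 α) = 0 := by
  obtain ⟨H, hH⟩ : ∃ H : ZMod d, H = ((d / 2 : ℕ) : ZMod d) := ⟨_, rfl⟩
  have hdpos : 0 < d := Nat.pos_of_ne_zero (NeZero.ne d)
  have hHH : H + H = 0 := by
    rw [hH, ← Nat.cast_add]
    obtain ⟨e, he⟩ := hev
    have : d / 2 + d / 2 = d := by omega
    rw [this]; simp
  have hH0 : H ≠ 0 := by
    rw [hH, Ne, ZMod.natCast_eq_zero_iff]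
    obtain ⟨e, he⟩ := hev
    intro h
    have := Nat.le_of_dvd (by omega) h
    omega
  obtain ⟨A, hA⟩ : ∃ A : Finset ℕ, A = range b ∪ (Ico 1 a).image (fun i => (i + 1) * b - 1) :=
    ⟨_, rfl⟩
  obtain ⟨E, hE⟩ : ∃ E : Finset ℕ, E = (range t).image (fun i => (i + 1) * b - 1) ∪ {d / 2} :=
    ⟨_, rfl⟩
  obtain ⟨T, hT⟩ : ∃ T : Finset (ZMod d × ZMod d), T = A.image (fun n : ℕ => ((0 : ZMod d), (n : ZMod d))) ∪
    E.image (fun n : ℕ => (H, (n : ZMod d))) := ⟨_, rfl⟩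
  have hAc : A.card ≤ b + (a - 1) := by
    rw [hA]
    refine (card_union_le _ _).trans ?_
    have := card_image_le (s := Ico 1 a) (f := fun i => (i + 1) * b - 1)
    simp only [Nat.card_Ico] at this
    simpa using this
  have hEc : E.card ≤ t + 1 := by
    rw [hE]
    refine (card_union_le _ _).trans ?_
    have := card_image_le (s := range t) (f := fun i => (i + 1) * b - 1)
    simpa using this
  have hTc : T.card ≤ a + b + t := by
    rw [hT]
    refine (card_union_le _ _).trans ?_
    have h1 := card_image_le (s := A) (f := fun n : ℕ => ((0 : ZMod d), (n : ZMod d)))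
    have h2 := card_image_le (s := E) (f := fun n : ℕ => (H, (n : ZMod d)))
    omega
  obtain ⟨S, hTS, hSc⟩ := exists_superset_card_eq hTc
    (by simpa [ZMod.card] using hcard)
  refine ⟨S, hSc, ?_⟩
  rintro ⟨α, hα, hS⟩
  have hAb : ∀ q < b, q ∈ A := fun q hq => by simp [hA, hq]
  have hAi : ∀ i < a, (i + 1) * b - 1 ∈ A := fun i hi => by
    rcases Nat.eq_zero_or_pos i with rfl | h
    · apply hAb; omega
    · rw [hA, mem_union]
      right
      exact mem_image.mpr ⟨i, by simp; omega, rfl⟩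
  have hAS : ∀ n ∈ A, ((0 : ZMod d), (n : ZMod d)) ∈ S := fun n hn =>
    hTS (hT ▸ mem_union_left _ (mem_image_of_mem (fun n : ℕ => ((0 : ZMod d), (n : ZMod d))) hn))
  have hES : ∀ n ∈ E, (H, (n : ZMod d)) ∈ S := fun n hn =>
    hTS (hT ▸ mem_union_right _ (mem_image_of_mem (fun n : ℕ => (H, (n : ZMod d))) hn))
  have hEi : ∀ i < t, (i + 1) * b - 1 ∈ E := fun i hi =>
    hE ▸ mem_union_left _ (mem_image.mpr ⟨i, by simpa using hi, rfl⟩)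
  have hEh : d / 2 ∈ E := by simp [hE]
  have hSS : ∀ x y x' y' : ZMod d, (x, y) ∈ S → (x', y') ∈ S → (x, y) ≠ (x', y') →
      ip d (pU d x y α) (pU d x' y' α) = 0 := by
    intro x y x' y' h1 h2 h3
    have h4 := hS (x, y) h1 (x', y') h2 h3
    simp only at h4
    exact h4
  exact h19_ana d hev a b t K hb hab hK ht H hH hHH hH0 α hα A E S hAb hAi hAS hES hEi hEh hSS

end helpers

/-- (Theorem 5 of the paper, second case.) Let `d ≥ 6` be even, `D = (d+2)/2`,
and suppose `⌊√D⌋⌈√D⌉ < D ≤ ⌊√D⌋(⌈√D⌉ + 1)`. Let `k₄` be the largest `k ≥ 0`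
with `D ≤ (⌊√D⌋ - k)(⌈√D⌉ + 1 + k)`. Then there exists a 1-LOCC
indistinguishable set of `⌊√D⌋ + ⌈√D⌉ + 1 + ⌈⌈(d+1)/4⌉ / (⌈√D⌉ + 1 + k₄)⌉`
generalized Bell states in `d ⊗ d`. -/
theorem stmt_19 (d : ℕ) [NeZero d] (hd : 6 ≤ d) (heven : Even d)
    (D : ℕ) (hD : D = (d + 2) / 2)
    (hlt : ⌊Real.sqrt D⌋₊ * ⌈Real.sqrt D⌉₊ < D)
    (hle : D ≤ ⌊Real.sqrt D⌋₊ * (⌈Real.sqrt D⌉₊ + 1))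
    (k₄ : ℕ)
    (hk₄ : IsGreatest {k : ℕ |
      (D : ℤ) ≤ ((⌊Real.sqrt D⌋₊ : ℤ) - (k : ℤ)) * ((⌈Real.sqrt D⌉₊ : ℤ) + 1 + (k : ℤ))} k₄) :
    ∃ S : Finset (ZMod d × ZMod d),
      S.card = ⌊Real.sqrt D⌋₊ + ⌈Real.sqrt D⌉₊ + 1 +
          ⌈(⌈((d : ℚ) + 1) / 4⌉₊ : ℚ) / ((⌈Real.sqrt D⌉₊ : ℚ) + 1 + (k₄ : ℚ))⌉₊ ∧
      ¬ ∃ α : ZMod d → ℂ, ip d α α = 1 ∧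
        ∀ p ∈ S, ∀ q ∈ S, p ≠ q → ip d (pU d p.1 p.2 α) (pU d q.1 q.2 α) = 0 := by
  set a' := ⌊Real.sqrt D⌋₊ with ha'
  set b' := ⌈Real.sqrt D⌉₊ with hb'
  have hk := hk₄.1
  simp only [Set.mem_ofPred_eq] at hk
  have hDpos : 0 < D := by omega
  have hka : k₄ < a' := by
    by_contra! h
    have : ((a' : ℤ) - k₄) * ((b' : ℤ) + 1 + k₄) ≤ 0 :=
      mul_nonpos_of_nonpos_of_nonneg (by omega) (by omega)
    omega
  have hsq : Real.sqrt D ≤ D := by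
    rw [Real.sqrt_le_left (by positivity)]
    have : (1 : ℝ) ≤ D := by exact_mod_cast hDpos
    nlinarith
  have haD : a' ≤ D := Nat.floor_le_of_le hsq
  have hbD : b' ≤ D := Nat.ceil_le.mpr hsq
  set K := ⌈((d : ℚ) + 1) / 4⌉₊ with hKdef
  set t := ⌈(K : ℚ) / ((b' : ℚ) + 1 + (k₄ : ℚ))⌉₊ with htdef
  have hK1 : d + 1 ≤ 4 * K := by
    have h : ((d : ℚ) + 1) / 4 ≤ K := Nat.le_ceil _
    have : ((d + 1 : ℕ) : ℚ) ≤ ((4 * K : ℕ) : ℚ) := by push_cast; linarith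
    exact_mod_cast this
  have hKd : K ≤ d := by
    apply Nat.ceil_le.mpr
    have : (6 : ℚ) ≤ d := by exact_mod_cast hd
    linarith
  have hbq : (0 : ℚ) < (b' : ℚ) + 1 + k₄ := by positivity
  have htb : K ≤ t * (b' + 1 + k₄) := by
    have h : (K : ℚ) / ((b' : ℚ) + 1 + (k₄ : ℚ)) ≤ t := Nat.le_ceil _
    rw [div_le_iff₀ hbq] at h
    exact_mod_cast h
  have htK : t ≤ K := by
    apply Nat.ceil_le.mpr
    apply div_le_self (by positivity)
    have : (0 : ℚ) ≤ b' := by positivity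
    have : (0 : ℚ) ≤ k₄ := by positivity
    linarith
  have hdd : 6 * d ≤ d * d := Nat.mul_le_mul_right d hd
  obtain ⟨e, he⟩ := heven
  obtain ⟨S, hS, hS'⟩ := h19_main d ⟨e, he⟩ (a' - k₄) (b' + 1 + k₄) t K (by omega) (by omega)
    (by
      zify [hka.le]
      have : ((D : ℕ) : ℤ) = (d : ℤ) / 2 + 1 := by omega
      omega) (by omega) htb (by omega)
  exact ⟨S, by rw [hS]; omega, hS'⟩
end
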